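/- arXiv:2002.11482 — 5 statements merged into one kernel-verified Lean document; each statement's English description precedes it below -/
import Mathlib

section
/- Let y = exp(7·π·i/4) ∈ ℂ and b_l = 2·i·sin(7·π·l/8) for positive integers l. Define B44 = (b_6·b_3)/(b_5·b_4) − (b_1^2·(b_4 + b_6))/(b_5^2·b_6), B23 = y·(b_6·b_7)/(b_4·b_5), B43 = y^2·(b_1·b_6)/(b_4·b_5), and B24 = −y^{−3}·( (b_1·b_7·(b_4 + b_6))/(b_5^2·b_4) + (b_1·b_7·(b_5 + b_7))/(b_6^2·b_5) ). Then B44·B23 − B43·B24 = (√2 − 1)/2 + ((3 − 2√2)/2)·i; in particular B44·B23 − B43·B24 ≠ 0. -/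
theorem aux_alg (s r y J : ℂ) (hJ : J ^ 2 = -1) (hr : r ^ 2 = 2) (hs : 4 * s ^ 2 = 2 - r)
    (hs0 : s ≠ 0) (hy : y = r / 2 * (1 - J)) (b1 b3 b4 b5 b6 b7 : ℂ)
    (h1 : b1 = 2 * J * s) (h3 : b3 = 2 * J * ((1 + r) * s)) (h4 : b4 = 2 * J * (-1))
    (h5 : b5 = 2 * J * ((1 + r) * s)) (h6 : b6 = 2 * J * (-(r / 2))) (h7 : b7 = 2 * J * s) :
    ((b6 * b3) / (b5 * b4) - (b1 ^ 2 * (b4 + b6)) / (b5 ^ 2 * b6)) * (y * (b6 * b7) / (b4 * b5))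
      - (y ^ 2 * (b1 * b6) / (b4 * b5)) * (-(y ^ (-3 : ℤ)) *
        ((b1 * b7 * (b4 + b6)) / (b5 ^ 2 * b4) + (b1 * b7 * (b5 + b7)) / (b6 ^ 2 * b5)))
      = (r - 1) / 2 + (3 - 2 * r) / 2 * J := by
  have hJ0 : J ≠ 0 := by rintro rfl; norm_num at hJ
  have hr0 : r ≠ 0 := by rintro rfl; norm_num at hr
  have hr1 : 1 + r ≠ 0 := by
    intro h
    have : r = -1 := by linear_combination h
    subst this; norm_num at hr
  have hyi : y ^ (-3 : ℤ) = r / 2 * (-1 + J) := by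
    have h : y ^ 3 * (r / 2 * (-1 + J)) = 1 := by
      subst hy
      have e : (1 - J) ^ 3 * (-1 + J) = 4 := by
        linear_combination (-J ^ 2 + 4 * J - 5) * hJ
      have e2 : r ^ 4 = 4 := by linear_combination (r ^ 2 + 2) * hr
      linear_combination (r ^ 4 / 16) * e + e2 / 4
    rw [zpow_neg]
    exact inv_eq_of_mul_eq_one_right h
  have ir1 : (1 + r)⁻¹ = r - 1 := inv_eq_of_mul_eq_one_right (by linear_combination hr)
  have A44 : (b6 * b3) / (b5 * b4) - (b1 ^ 2 * (b4 + b6)) / (b5 ^ 2 * b6) = 1 - r / 2 := by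
    have e1 : (b6 * b3) / (b5 * b4) = r / 2 := by subst_vars; field_simp
    have e2 : (b1 ^ 2 * (b4 + b6)) / (b5 ^ 2 * b6) = (1 + r)⁻¹ ^ 2 * (2 + r) / r := by
      subst_vars; field_simp; try ring
    rw [e1, e2, ir1]; field_simp
    grind
  have A23 : y * (b6 * b7) / (b4 * b5) = (r - 1) / 2 * (1 - J) := by
    have e : y * (b6 * b7) / (b4 * b5) = y * (r / 2) * (1 + r)⁻¹ := by
      rw [h4, h5, h6, h7]; field_simp
    rw [e, ir1, hy]; linear_combination ((r - 1) * (1 - J) / 4) * hr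
  have A43 : y ^ 2 * (b1 * b6) / (b4 * b5) = -J * (1 - r / 2) := by
    have e : y ^ 2 * (b1 * b6) / (b4 * b5) = y ^ 2 * (r / 2) * (1 + r)⁻¹ := by
      rw [h4, h5, h6, h1]; field_simp
    rw [e, ir1, hy]; linear_combination (r ^ 3 * (r - 1) / 8) * hJ - (J / 4 * (r ^ 2 + 2 - r)) * hr
  have A24 : (b1 * b7 * (b4 + b6)) / (b5 ^ 2 * b4) + (b1 * b7 * (b5 + b7)) / (b6 ^ 2 * b5)
      = - (r / 2) * (-1) := by
    have e1 : (b1 * b7 * (b4 + b6)) / (b5 ^ 2 * b4) = (1 + r)⁻¹ ^ 2 * (1 + r / 2) := by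
      rw [h4, h5, h6, h7, h1]; field_simp; try ring
    have e2 : (b1 * b7 * (b5 + b7)) / (b6 ^ 2 * b5)
        = (4 * s ^ 2) * (2 + r) * (1 + r)⁻¹ / r ^ 2 := by
      rw [h5, h6, h7, h1]; field_simp; try ring
    rw [e1, e2, ir1, hs, hr]; grind
  rw [A44, A23, A43, A24, hyi]
  clear * - hJ hr
  grind

/-- braiding-matrix entry identity for the 5A-algebra
(minimal model L(25/28,0), Kac parameters p = 7, p' = 8). -/
theorem stmt_0 :
    let y : ℂ := Complex.exp (7 * Real.pi * Complex.I / 4)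
    let b : ℕ → ℂ := fun l => 2 * Complex.I * Real.sin (7 * Real.pi * l / 8)
    let B44 : ℂ := (b 6 * b 3) / (b 5 * b 4) - (b 1 ^ 2 * (b 4 + b 6)) / (b 5 ^ 2 * b 6)
    let B23 : ℂ := y * (b 6 * b 7) / (b 4 * b 5)
    let B43 : ℂ := y ^ 2 * (b 1 * b 6) / (b 4 * b 5)
    let B24 : ℂ := -(y ^ (-3 : ℤ)) *
        ((b 1 * b 7 * (b 4 + b 6)) / (b 5 ^ 2 * b 4)
          + (b 1 * b 7 * (b 5 + b 7)) / (b 6 ^ 2 * b 5))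
    B44 * B23 - B43 * B24
        = ((Real.sqrt 2 - 1) / 2 : ℂ) + (((3 - 2 * Real.sqrt 2) / 2 : ℝ) : ℂ) * Complex.I
      ∧ B44 * B23 - B43 * B24 ≠ 0 := by
  have hsq : (√2 : ℝ) ^ 2 = 2 := Real.sq_sqrt (by norm_num)
  have hspos : 0 < Real.sin (Real.pi / 8) :=
    Real.sin_pos_of_pos_of_lt_pi (by positivity) (by linarith [Real.pi_pos])
  have hs : 4 * Real.sin (Real.pi / 8) ^ 2 = 2 - √2 := by
    have h := Real.cos_sq' (Real.pi / 8)
    have h2 := Real.cos_two_mul (Real.pi / 8)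
    rw [show 2 * (Real.pi / 8) = Real.pi / 4 by ring, Real.cos_pi_div_four] at h2
    linarith
  have hc : Real.cos (Real.pi / 8) = (1 + √2) * Real.sin (Real.pi / 8) := by
    have h2 := Real.sin_two_mul (Real.pi / 8)
    rw [show 2 * (Real.pi / 8) = Real.pi / 4 by ring, Real.sin_pi_div_four] at h2
    apply mul_left_cancel₀ hspos.ne'
    linear_combination (-1 / 2) * h2 - (1 + √2) / 4 * hs + hsq / 4
  have t1 : Real.sin (7 * Real.pi * (1 : ℕ) / 8) = Real.sin (Real.pi / 8) := by
    rw [← Real.sin_pi_sub]; congr 1; push_cast; ring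
  have t3 : Real.sin (7 * Real.pi * (3 : ℕ) / 8) = (1 + √2) * Real.sin (Real.pi / 8) := by
    rw [← hc, ← Real.sin_add_pi_div_two, ← Real.sin_add_two_pi (Real.pi / 8 + Real.pi / 2)]; congr 1; push_cast; ring
  have t4 : Real.sin (7 * Real.pi * (4 : ℕ) / 8) = -1 := by
    rw [← Real.sin_pi_div_two, ← Real.sin_add_pi, ← Real.sin_add_two_pi (Real.pi / 2 + Real.pi)]
    congr 1; push_cast; ring
  have t5 : Real.sin (7 * Real.pi * (5 : ℕ) / 8) = (1 + √2) * Real.sin (Real.pi / 8) := by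
    rw [← hc, ← Real.sin_pi_div_two_sub, ← Real.sin_add_two_pi (_ - _),
      ← Real.sin_add_two_pi (_ + _)]; congr 1; push_cast; ring
  have t6 : Real.sin (7 * Real.pi * (6 : ℕ) / 8) = -(√2 / 2) := by
    rw [← Real.sin_pi_div_four, ← Real.sin_add_pi, ← Real.sin_add_two_pi (_ + _),
      ← Real.sin_add_two_pi (_ + _ + _)]
    congr 1; push_cast; ring
  have t7 : Real.sin (7 * Real.pi * (7 : ℕ) / 8) = Real.sin (Real.pi / 8) := by
    rw [← Real.sin_add_two_pi (Real.pi / 8), ← Real.sin_add_two_pi (_ + _),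
      ← Real.sin_add_two_pi (_ + _ + _)]
    congr 1; push_cast; ring
  have hy : Complex.exp (7 * Real.pi * Complex.I / 4)
      = ((√2 : ℝ) : ℂ) / 2 * (1 - Complex.I) := by
    have e : (7 * Real.pi * Complex.I / 4 : ℂ)
        = ((-(Real.pi / 4) : ℝ) : ℂ) * Complex.I + 2 * Real.pi * Complex.I := by
      push_cast; ring
    rw [e, Complex.exp_periodic, Complex.exp_mul_I, ← Complex.ofReal_cos, ← Complex.ofReal_sin,
      Real.cos_neg, Real.sin_neg, Real.cos_pi_div_four, Real.sin_pi_div_four]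
    push_cast; ring
  intro y b B44 B23 B43 B24
  have key : B44 * B23 - B43 * B24 = ((Real.sqrt 2 - 1) / 2 : ℂ)
      + (((3 - 2 * Real.sqrt 2) / 2 : ℝ) : ℂ) * Complex.I := by
    have := aux_alg (Real.sin (Real.pi / 8) : ℝ) (√2 : ℝ) y Complex.I Complex.I_sq
      (by exact_mod_cast hsq) (by exact_mod_cast hs) (by exact_mod_cast hspos.ne') hy
      (b 1) (b 3) (b 4) (b 5) (b 6) (b 7)
      (by simp only [b]; rw [t1]) (by simp only [b]; rw [t3]; push_cast; rfl)
      (by simp only [b]; rw [t4]; push_cast; rfl)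
      (by simp only [b]; rw [t5]; push_cast; rfl) (by simp only [b]; rw [t6]; push_cast; rfl)
      (by simp only [b]; rw [t7])
    refine Eq.trans this ?_
    push_cast; rfl
  refine ⟨key, ?_⟩
  rw [key]
  intro h
  have h2 := congrArg Complex.re h
  rw [show ((√2 : ℝ) - 1 : ℂ) / 2 = (((√2 - 1) / 2 : ℝ) : ℂ) by push_cast; rfl] at h2
  simp only [Complex.add_re, Complex.ofReal_re, Complex.re_ofReal_mul, Complex.I_re,
    Complex.zero_re] at h2
  have : √2 = 1 := by linarith
  rw [this] at hsq
  norm_num at hsq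
end

section
/- Let y = exp(7·π·i/4) ∈ ℂ and b_l = 2·i·sin(7·π·l/8) for positive integers l. Then −y^{−1}·((b_1·b_4)/(b_5·b_6))·( (b_1·b_3·(b_3 + b_5))/(b_5·b_4^2) + (b_1·b_3·(b_4 + b_6))/(b_5^2·b_6) ) = −y^{−1}. -/
/-- the product of braiding-matrix entries
(B_{3,3}^{4,4})_{4,2} · (B_{3,3}^{4,4})_{3,4} for the 5A-algebra equals −y⁻¹. -/
theorem stmt_2 :
    let y : ℂ := Complex.exp (7 * Real.pi * Complex.I / 4)
    let b : ℕ → ℂ := fun l => 2 * Complex.I * Real.sin (7 * Real.pi * l / 8)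
    let E : ℂ := -(y ^ (-1 : ℤ)) * ((b 1 * b 4) / (b 5 * b 6)) *
        ((b 1 * b 3 * (b 3 + b 5)) / (b 5 * b 4 ^ 2)
          + (b 1 * b 3 * (b 4 + b 6)) / (b 5 ^ 2 * b 6))
    E = -(y ^ (-1 : ℤ)) := by
  intro y b E
  obtain ⟨s, hs⟩ : ∃ s, s = Real.sin (Real.pi / 8) := ⟨_, rfl⟩
  obtain ⟨c, hc⟩ : ∃ c, c = Real.cos (Real.pi / 8) := ⟨_, rfl⟩
  have hpi := Real.pi_pos
  have s0 : 0 < s := hs ▸ Real.sin_pos_of_pos_of_lt_pi (by linarith) (by linarith)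
  have c0 : 0 < c := hc ▸ Real.cos_pos_of_mem_Ioo ⟨by linarith, by linarith⟩
  have h2 : Real.sin (Real.pi / 4) = 2 * s * c := by
    rw [hs, hc, ← Real.sin_two_mul]; congr 1; ring
  have h3 : Real.cos (Real.pi / 4) = 2 * c ^ 2 - 1 := by
    rw [hc, ← Real.cos_two_mul]; congr 1; ring
  have hk : 2 * s * c = 2 * c ^ 2 - 1 := by
    rw [← h2, ← h3, Real.sin_pi_div_four, Real.cos_pi_div_four]
  have e1 : Real.sin (7 * Real.pi * (1 : ℕ) / 8) = s := by
    rw [hs, ← Real.sin_pi_sub]; congr 1; push_cast; ring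
  have e3 : Real.sin (7 * Real.pi * (3 : ℕ) / 8) = c := by
    have h : 7 * Real.pi * (3 : ℕ) / 8 = (Real.pi / 8 + Real.pi / 2) + 2 * Real.pi := by push_cast; ring
    rw [h, Real.sin_add_two_pi, Real.sin_add_pi_div_two, hc]
  have e4 : Real.sin (7 * Real.pi * (4 : ℕ) / 8) = -1 := by
    have h : 7 * Real.pi * (4 : ℕ) / 8 = (Real.pi / 2 + Real.pi) + 2 * Real.pi := by push_cast; ring
    rw [h, Real.sin_add_two_pi, Real.sin_add_pi, Real.sin_pi_div_two]
  have e5 : Real.sin (7 * Real.pi * (5 : ℕ) / 8) = c := by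
    have h : 7 * Real.pi * (5 : ℕ) / 8 = (Real.pi / 2 - Real.pi / 8) + 2 * Real.pi + 2 * Real.pi := by push_cast; ring
    rw [h, Real.sin_add_two_pi, Real.sin_add_two_pi, Real.sin_pi_div_two_sub, hc]
  have e6 : Real.sin (7 * Real.pi * (6 : ℕ) / 8) = -(2 * s * c) := by
    have h : 7 * Real.pi * (6 : ℕ) / 8 = (Real.pi / 4 + Real.pi) + 2 * Real.pi + 2 * Real.pi := by push_cast; ring
    rw [h, Real.sin_add_two_pi, Real.sin_add_two_pi, Real.sin_add_pi, h2]
  have key : (s * (-1)) / (c * (-(2 * s * c))) * ((s * c * (c + c)) / (c * (-1) ^ 2)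
      + (s * c * (-1 + -(2 * s * c))) / (c ^ 2 * (-(2 * s * c)))) = 1 := by
    have : -1 + -(2 * s * c) = -(2 * c ^ 2) := by linarith
    rw [this]
    field_simp
    linarith
  have keyC : ((s:ℂ) * (-1)) / (c * (-(2 * s * c))) * ((s * c * (c + c)) / (c * (-1) ^ 2)
      + (s * c * (-1 + -(2 * s * c))) / (c ^ 2 * (-(2 * s * c)))) = 1 := by
    exact_mod_cast key
  have cC : (c:ℂ) ≠ 0 := by exact_mod_cast c0.ne'
  have sC : (s:ℂ) ≠ 0 := by exact_mod_cast s0.ne'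
  have hI := Complex.I_ne_zero
  simp only [E, b, e1, e3, e4, e5, e6]
  rw [mul_assoc]
  conv_rhs => rw [← mul_one (-(y ^ (-1 : ℤ))), ← keyC]
  congr 1
  push_cast
  field_simp
end

section
/- Let y = exp(7·π·i/4) ∈ ℂ and b_l = 2·i·sin(7·π·l/8) for positive integers l. Then y^{−1}·((b_4·b_3)/(b_6·b_5))·( (b_6·b_3)/(b_5·b_4) − (b_1^2·(b_4 + b_6))/(b_5^2·b_6) ) + y^{−1}·((b_1·b_4)/(b_5·b_6))·( (b_1·b_3·(b_3 + b_5))/(b_5·b_4^2) + (b_1·b_3·(b_4 + b_6))/(b_5^2·b_6) ) = √2·y^{−1} = 1 + i; in particular this quantity is nonzero. -/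
/-- (B_{3,3}^{4,4})_{3,2}·(B_{3,3}^{4,4})_{4,4} − (B_{3,3}^{4,4})_{4,2}·(B_{3,3}^{4,4})_{3,4}
equals √2·y⁻¹ = 1 + i, in particular it is nonzero. -/
theorem stmt_3 :
    let y : ℂ := Complex.exp (7 * Real.pi * Complex.I / 4)
    let b : ℕ → ℂ := fun l => 2 * Complex.I * Real.sin (7 * Real.pi * l / 8)
    let E : ℂ := y ^ (-1 : ℤ) * ((b 4 * b 3) / (b 6 * b 5)) *
        ((b 6 * b 3) / (b 5 * b 4) - (b 1 ^ 2 * (b 4 + b 6)) / (b 5 ^ 2 * b 6))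
      + y ^ (-1 : ℤ) * ((b 1 * b 4) / (b 5 * b 6)) *
        ((b 1 * b 3 * (b 3 + b 5)) / (b 5 * b 4 ^ 2)
          + (b 1 * b 3 * (b 4 + b 6)) / (b 5 ^ 2 * b 6))
    E = (Real.sqrt 2 : ℂ) * y ^ (-1 : ℤ)
      ∧ E = 1 + Complex.I
      ∧ E ≠ 0 := by
  intro y b E
  have hr2 : (Real.sqrt 2 : ℂ) ^ 2 = 2 := by
    rw [← Complex.ofReal_pow, Real.sq_sqrt (by norm_num)]; norm_num
  have hr0 : (Real.sqrt 2 : ℂ) ≠ 0 := by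
    intro h; rw [h] at hr2; norm_num at hr2
  have hc0 : (Real.cos (Real.pi / 8) : ℂ) ≠ 0 := by
    rw [Complex.ofReal_ne_zero]
    exact (Real.cos_pos_of_mem_Ioo ⟨by linarith [Real.pi_pos], by linarith [Real.pi_pos]⟩).ne'
  have hs2 : 4 * (Real.sin (Real.pi / 8) : ℂ) ^ 2 = 2 - (Real.sqrt 2 : ℂ) := by
    have h : 4 * Real.sin (Real.pi / 8) ^ 2 = 2 - Real.sqrt 2 := by
      have h1 := Real.cos_sq (Real.pi / 8)
      rw [show 2 * (Real.pi / 8) = Real.pi / 4 by ring, Real.cos_pi_div_four] at h1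
      linarith [Real.sin_sq_add_cos_sq (Real.pi / 8)]
    exact_mod_cast h
  have b1 : b 1 = 2 * Complex.I * Real.sin (Real.pi / 8) := by
    simp only [b]
    congr 2
    rw [← Real.sin_pi_sub]; congr 1; push_cast; ring
  have b3 : b 3 = 2 * Complex.I * Real.cos (Real.pi / 8) := by
    simp only [b]
    congr 2
    rw [← Real.sin_add_pi_div_two, ← Real.sin_add_two_pi (Real.pi / 8 + Real.pi / 2)]; congr 1; push_cast; ring
  have b5 : b 5 = 2 * Complex.I * Real.cos (Real.pi / 8) := by
    simp only [b]
    congr 2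
    rw [← Real.sin_pi_div_two_sub, ← Real.sin_add_two_pi (Real.pi / 2 - Real.pi / 8),
      ← Real.sin_add_two_pi (Real.pi / 2 - Real.pi / 8 + 2 * Real.pi)]
    congr 1; push_cast; ring
  have b4 : b 4 = 2 * Complex.I * (-1) := by
    simp only [b]
    congr 1
    have : Real.sin (7 * Real.pi * (4 : ℕ) / 8) = -1 := by
      rw [← Real.sin_pi_div_two, ← Real.sin_neg, ← Real.sin_add_two_pi (-(Real.pi / 2)),
        ← Real.sin_add_two_pi (-(Real.pi / 2) + 2 * Real.pi)]
      congr 1; push_cast; ring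
    rw [this]; norm_num
  have b6 : b 6 = 2 * Complex.I * (-(Real.sqrt 2 / 2)) := by
    simp only [b]
    congr 1
    have : Real.sin (7 * Real.pi * (6 : ℕ) / 8) = -(Real.sqrt 2 / 2) := by
      rw [← Real.sin_pi_div_four, ← Real.sin_add_pi, ← Real.sin_add_two_pi (Real.pi / 4 + Real.pi),
        ← Real.sin_add_two_pi (Real.pi / 4 + Real.pi + 2 * Real.pi)]
      congr 1; push_cast; ring
    rw [this]; push_cast; ring
  have hy : y ^ (-1 : ℤ) = Real.sqrt 2 / 2 + Real.sqrt 2 / 2 * Complex.I := by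
    simp only [y]
    rw [zpow_neg_one, ← Complex.exp_neg, ← Complex.exp_periodic,
      show -(7 * (Real.pi : ℂ) * Complex.I / 4) + 2 * Real.pi * Complex.I
        = ((Real.pi / 4 : ℝ) : ℂ) * Complex.I by push_cast; ring,
      Complex.exp_mul_I, ← Complex.ofReal_cos, ← Complex.ofReal_sin, Real.cos_pi_div_four,
      Real.sin_pi_div_four]
    push_cast; ring
  have hE : E = (Real.sqrt 2 : ℂ) * y ^ (-1 : ℤ) := by
    simp only [E]
    rw [b1, b3, b4, b5, b6]
    generalize y ^ (-1 : ℤ) = z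
    generalize (Real.sqrt 2 : ℂ) = r at *
    generalize (Real.cos (Real.pi / 8) : ℂ) = c at *
    generalize (Real.sin (Real.pi / 8) : ℂ) = s at *
    have hI := Complex.I_ne_zero
    have key : ∀ t : ℂ, t ≠ 0 →
        z * ((t * (-1) * (t * c)) / (t * (-(r / 2)) * (t * c))) *
        ((t * (-(r / 2)) * (t * c)) / (t * c * (t * (-1)))
          - ((t * s) ^ 2 * (t * (-1) + t * (-(r / 2)))) / ((t * c) ^ 2 * (t * (-(r / 2)))))
        + z * ((t * s * (t * (-1))) / (t * c * (t * (-(r / 2))))) *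
        ((t * s * (t * c) * (t * c + t * c)) / (t * c * (t * (-1)) ^ 2)
          + (t * s * (t * c) * (t * (-1) + t * (-(r / 2)))) / ((t * c) ^ 2 * (t * (-(r / 2)))))
        = r * z := by
      intro t ht
      have e1 : (t * (-1) * (t * c)) / (t * (-(r / 2)) * (t * c)) = 2 / r := by
        field_simp
      have e2 : (t * (-(r / 2)) * (t * c)) / (t * c * (t * (-1))) = r / 2 := by
        field_simp
      have e3 : ((t * s) ^ 2 * (t * (-1) + t * (-(r / 2)))) / ((t * c) ^ 2 * (t * (-(r / 2))))
          = (s / c) ^ 2 * (2 / r + 1) := by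
        field_simp; ring
      have e4 : (t * s * (t * (-1))) / (t * c * (t * (-(r / 2)))) = s / c * (2 / r) := by
        field_simp
      have e5 : (t * s * (t * c) * (t * c + t * c)) / (t * c * (t * (-1)) ^ 2) = 2 * s * c := by
        field_simp; ring
      have e6 : (t * s * (t * c) * (t * (-1) + t * (-(r / 2)))) / ((t * c) ^ 2 * (t * (-(r / 2))))
          = s / c * (2 / r + 1) := by
        field_simp; ring
      rw [e1, e2, e3, e4, e5, e6]
      have e7 : z * (2 / r) * (r / 2 - (s / c) ^ 2 * (2 / r + 1))
          + z * (s / c * (2 / r)) * (2 * s * c + s / c * (2 / r + 1))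
          = z * (1 + 4 * s ^ 2 / r) := by
        field_simp; ring
      rw [e7, hs2]
      field_simp
      linear_combination (-z) * hr2
    exact key (2 * Complex.I) (by simp)
  have hE2 : E = 1 + Complex.I := by
    rw [hE, hy]
    linear_combination ((1 + Complex.I) / 2) * hr2
  refine ⟨hE, hE2, ?_⟩
  rw [hE2]
  intro h
  have := congrArg Complex.re h
  simp at this
end

section
/- Let y = exp(11·π·i/6) ∈ ℂ and b_l = 2·i·sin(11·π·l/12) for positive integers l. Then y^6 · (b_1^3/b_2^3) · ((b_1 + b_3)/b_3) · ((b_10·b_9·b_8)/(b_7·b_6·b_5)) · ((b_3·b_4 + b_1·b_4 + b_1·b_2)/(b_3·b_4)) ≠ 0. -/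
theorem aux_sin (l : ℕ) (h0 : 0 < l) (h1 : l < 12) :
    0 < -((-1 : ℝ) ^ l) * Real.sin (11 * Real.pi * l / 12) := by
  have e : 11 * Real.pi * l / 12 = l * Real.pi - l * Real.pi / 12 := by ring
  have h0' : (0 : ℝ) < l := by exact_mod_cast h0
  have h1' : (l : ℝ) < 12 := by exact_mod_cast h1
  have hp : 0 < Real.sin (l * Real.pi / 12) := by
    apply Real.sin_pos_of_pos_of_lt_pi
    · have := Real.pi_pos
      positivity
    · nlinarith [Real.pi_pos]
  rw [e, Real.sin_nat_mul_pi_sub]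
  have hs : ((-1 : ℝ) ^ l) * ((-1 : ℝ) ^ l) = 1 := by
    rw [← mul_pow]; norm_num
  have : -((-1 : ℝ) ^ l) * -((-1 : ℝ) ^ l * Real.sin (l * Real.pi / 12))
      = Real.sin (l * Real.pi / 12) := by
    linear_combination Real.sin (l * Real.pi / 12) * hs
  rw [this]
  exact hp

/-- nonvanishing of the braiding-matrix entry (B_{2,2}^{2,2})_{2,1} for the
3C-algebra (minimal model L(21/22,0), Kac parameters p = 11, p' = 12). -/
theorem stmt_4 :
    let y : ℂ := Complex.exp (11 * Real.pi * Complex.I / 6)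
    let b : ℕ → ℂ := fun l => 2 * Complex.I * Real.sin (11 * Real.pi * l / 12)
    y ^ 6 * (b 1 ^ 3 / b 2 ^ 3) * ((b 1 + b 3) / b 3) *
        ((b 10 * b 9 * b 8) / (b 7 * b 6 * b 5)) *
        ((b 3 * b 4 + b 1 * b 4 + b 1 * b 2) / (b 3 * b 4)) ≠ 0 := by
  intro y b
  obtain ⟨s, hs⟩ : ∃ s : ℕ → ℝ, s = fun l : ℕ => Real.sin (11 * Real.pi * l / 12) := ⟨_, rfl⟩
  have hb : ∀ l, b l = 2 * Complex.I * (s l : ℂ) := fun l => by rw [hs]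
  have hpos : ∀ l : ℕ, 0 < l → l < 12 → 0 < -((-1 : ℝ) ^ l) * s l := fun l h h' => by
    rw [hs]; exact aux_sin l h h'
  have hI : (2 * Complex.I : ℂ) ≠ 0 := by simp
  have hne : ∀ l : ℕ, 0 < l → l < 12 → b l ≠ 0 := fun l h h' => by
    rw [hb]
    refine mul_ne_zero hI ?_
    intro h0
    have h1 : s l = 0 := by exact_mod_cast h0
    have := hpos l h h'
    rw [h1] at this
    simp at this
  have p1 : 0 < s 1 := by have := hpos 1 (by norm_num) (by norm_num); norm_num at this; exact this
  have p2 : s 2 < 0 := by have := hpos 2 (by norm_num) (by norm_num); norm_num at this; exact this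
  have p3 : 0 < s 3 := by have := hpos 3 (by norm_num) (by norm_num); norm_num at this; exact this
  have p4 : s 4 < 0 := by have := hpos 4 (by norm_num) (by norm_num); norm_num at this; exact this
  have hA : b 1 + b 3 ≠ 0 := by
    have e : b 1 + b 3 = 2 * Complex.I * ((s 1 + s 3 : ℝ) : ℂ) := by
      rw [hb, hb]; push_cast; ring
    rw [e]
    refine mul_ne_zero hI (Complex.ofReal_ne_zero.mpr ?_)
    linarith
  have hB : b 3 * b 4 + b 1 * b 4 + b 1 * b 2 ≠ 0 := by
    have e : b 3 * b 4 + b 1 * b 4 + b 1 * b 2 =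
        (2 * Complex.I) ^ 2 * ((s 3 * s 4 + s 1 * s 4 + s 1 * s 2 : ℝ) : ℂ) := by
      rw [hb, hb, hb, hb]; push_cast; ring
    rw [e]
    refine mul_ne_zero (pow_ne_zero 2 hI) (Complex.ofReal_ne_zero.mpr ?_)
    have := mul_neg_of_pos_of_neg p3 p4
    have := mul_neg_of_pos_of_neg p1 p4
    have := mul_neg_of_pos_of_neg p1 p2
    linarith
  have hy : y ≠ 0 := Complex.exp_ne_zero _
  have n1 := hne 1 (by norm_num) (by norm_num)
  have n2 := hne 2 (by norm_num) (by norm_num)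
  have n3 := hne 3 (by norm_num) (by norm_num)
  have n4 := hne 4 (by norm_num) (by norm_num)
  have n5 := hne 5 (by norm_num) (by norm_num)
  have n6 := hne 6 (by norm_num) (by norm_num)
  have n7 := hne 7 (by norm_num) (by norm_num)
  have n8 := hne 8 (by norm_num) (by norm_num)
  have n9 := hne 9 (by norm_num) (by norm_num)
  have n10 := hne 10 (by norm_num) (by norm_num)
  clear_value b y
  exact mul_ne_zero (mul_ne_zero (mul_ne_zero (mul_ne_zero (pow_ne_zero _ hy)
    (div_ne_zero (pow_ne_zero _ n1) (pow_ne_zero _ n2))) (div_ne_zero hA n3))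
    (div_ne_zero (mul_ne_zero (mul_ne_zero n10 n9) n8) (mul_ne_zero (mul_ne_zero n7 n6) n5)))
    (div_ne_zero hB (mul_ne_zero n3 n4))
end

section
/- Let B and T be functions from {2,3,4} × {2,3,4} to ℂ and let μ, γ ∈ ℂ. Set d_2 = 1, d_3 = μ, d_4 = γ. Suppose that for all j, k ∈ {2,3,4}: (i) B(2,j)·T(2,k) + B(3,j)·T(3,k) + B(4,j)·T(4,k) equals 1 if j = k and 0 otherwise, and (ii) d_2·B(2,j)·T(2,k) + d_3·B(3,j)·T(3,k) + d_4·B(4,j)·T(4,k) equals d_k if j = k and 0 otherwise. If B(3,2)·B(4,4) − B(4,2)·B(3,4) ≠ 0, then μ = 1. -/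
/-- the linear-algebra kernel of Claim 4 in the uniqueness theorem
for the 5A-algebra. -/
theorem stmt_6 (B T : ℕ → ℕ → ℂ) (μ γ : ℂ) (d : ℕ → ℂ)
    (hd2 : d 2 = 1) (hd3 : d 3 = μ) (hd4 : d 4 = γ)
    (hi : ∀ j ∈ ({2, 3, 4} : Set ℕ), ∀ k ∈ ({2, 3, 4} : Set ℕ),
      B 2 j * T 2 k + B 3 j * T 3 k + B 4 j * T 4 k = if j = k then 1 else 0)
    (hii : ∀ j ∈ ({2, 3, 4} : Set ℕ), ∀ k ∈ ({2, 3, 4} : Set ℕ),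
      d 2 * B 2 j * T 2 k + d 3 * B 3 j * T 3 k + d 4 * B 4 j * T 4 k
        = if j = k then d k else 0)
    (hdet : B 3 2 * B 4 4 - B 4 2 * B 3 4 ≠ 0) :
    μ = 1 := by
  have h1 : (!![B 2 2, B 3 2, B 4 2; B 2 3, B 3 3, B 4 3; B 2 4, B 3 4, B 4 4] :
      Matrix (Fin 3) (Fin 3) ℂ) *
      !![T 2 2, T 2 3, T 2 4; T 3 2, T 3 3, T 3 4; T 4 2, T 4 3, T 4 4] = 1 := by
    ext a b
    fin_cases a <;> fin_cases b <;>
      simp [Matrix.mul_apply, Fin.sum_univ_three, hi]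
  have h2 := mul_eq_one_comm.mp h1
  have e (a b : Fin 3) := congrFun (congrFun h2 a) b
  -- the relations `∑ k, T i k * B l k = δ i l` needed for `l = 3, 4`
  have e01 := e 0 1
  have e11 := e 1 1
  have e21 := e 2 1
  have e02 := e 0 2
  have e12 := e 1 2
  have e22 := e 2 2
  simp [Matrix.mul_apply, Fin.sum_univ_three] at e01 e11 e21 e02 e12 e22
  have f22 := hii 2 (by simp) 2 (by simp)
  have f23 := hii 2 (by simp) 3 (by simp)
  have f24 := hii 2 (by simp) 4 (by simp)
  have f42 := hii 4 (by simp) 2 (by simp)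
  have f43 := hii 4 (by simp) 3 (by simp)
  have f44 := hii 4 (by simp) 4 (by simp)
  simp [hd2, hd3, hd4] at f22 f23 f24 f42 f43 f44
  have g32 : (μ - 1) * B 3 2 = 0 := by
    linear_combination B 3 2 * f22 + B 3 3 * f23 + B 3 4 * f24
      - B 2 2 * e01 - μ * B 3 2 * e11 - γ * B 4 2 * e21
  have g42 : (γ - 1) * B 4 2 = 0 := by
    linear_combination B 4 2 * f22 + B 4 3 * f23 + B 4 4 * f24
      - B 2 2 * e02 - μ * B 3 2 * e12 - γ * B 4 2 * e22
  have g34 : (μ - γ) * B 3 4 = 0 := by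
    linear_combination B 3 2 * f42 + B 3 3 * f43 + B 3 4 * f44
      - B 2 4 * e01 - μ * B 3 4 * e11 - γ * B 4 4 * e21
  have key : (μ - 1) * (B 3 2 * B 4 4 - B 4 2 * B 3 4) = 0 := by
    linear_combination B 4 4 * g32 - B 3 4 * g42 - B 4 2 * g34
  exact sub_eq_zero.mp ((mul_eq_zero.mp key).resolve_right hdet)
end
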